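/- arXiv:2301.13369 — 2 statements merged into one kernel-verified Lean document; each statement's English description precedes it below -/
import Mathlib

section
/- Let γ solve the nonlocal two-phase Stefan problem with kernels k, η satisfying (K). For any 1 < p < ∞, the L^p norm of the positive part satisfies d/dt ‖γ⁺(t,·)‖_{L^p(ℝ^n)}^p ≤ 0; consequently ‖γ⁺(t,·)‖_{L^p} ≤ ‖γ⁺(0,·)‖_{L^p} for all t > 0. -/
open MeasureTheory Filter

/-- A classical bounded solution of the nonlocal two-phase Stefan problem. -/
def IsTwoPhaseStefanSol {n : ℕ} (a b ℓ₀ : ℝ)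
    (k η : EuclideanSpace ℝ (Fin n) → ℝ)
    (γ : ℝ → EuclideanSpace ℝ (Fin n) → ℝ) : Prop :=
  (∀ x, ContinuousOn (fun t => γ t x) (Set.Ici 0)) ∧
  (∀ t, Measurable (γ t)) ∧
  (∀ t ≥ 0, ∃ C : ℝ, ∀ x, |γ t x| ≤ C) ∧
  (∀ t > 0, ∀ x, HasDerivAt (fun s => γ s x)
      (a * ((∫ y, k (x - y) * max (γ t y) 0) - max (γ t x) 0)
        + b * ((∫ y, η (x - y) * min (γ t y + ℓ₀) 0) - min (γ t x + ℓ₀) 0)) t)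

theorem absorb_bound (V : Set ℝ) (B0 N : ℝ) (h0 : ∀ v ∈ V, v ≤ B0)
    (h : ∀ B, (∀ v ∈ V, v ≤ B) → ∀ v ∈ V, v ≤ N + B / 2) : ∀ v ∈ V, v ≤ 2 * N := by
  intro v hv
  have hb : BddAbove V := ⟨B0, h0⟩
  have h1 : sSup V ≤ N + sSup V / 2 :=
    csSup_le ⟨v, hv⟩ (h _ (fun w hw => le_csSup hb hw))
  have h2 := le_csSup hb hv
  linarith

theorem oneside_bound {X : Type*} (g : ℝ → X → ℝ) (L : ℝ) (hL : 0 < L)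
    (hbd : ∀ t, ∃ C, ∀ x, |g t x| ≤ C)
    (H : ∀ s t S, s ≤ t → (∀ r ∈ Set.Icc s t, r ≠ s → r ≠ t → ∀ x, |g r x| ≤ S) →
      ∀ x, |g t x - g s x| ≤ L * S * (t - s))
    (c t N : ℝ) (hct : c < t) (hlen : L * (t - c) ≤ 1 / 2)
    (hloc : ∀ s, c < s → s ≤ t → ∃ S, ∀ r ∈ Set.Icc s t, ∀ x, |g r x| ≤ S)
    (hN : ∀ x, |g c x| ≤ N) : ∀ x, |g t x| ≤ 2 * N := by
  obtain ⟨C, hC⟩ := hbd t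
  have key : ∀ s, c < s → s ≤ t → ∀ r ∈ Set.Icc s t, ∀ x, |g r x| ≤ 2 * C := by
    intro s hs hst r hr x
    obtain ⟨S, hS⟩ := hloc s hs hst
    refine absorb_bound {v | ∃ r ∈ Set.Icc s t, ∃ x, v = |g r x|} S C ?_ ?_ _ ⟨r, hr, x, rfl⟩
    · rintro v ⟨r, hr, x, rfl⟩; exact hS r hr x
    · rintro B hB v ⟨r, hr, x, rfl⟩
      have h1 := H r t B hr.2 (fun q hq _ _ x =>
        hB _ ⟨q, ⟨hr.1.trans hq.1, hq.2⟩, x, rfl⟩) x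
      have h2 := hC x
      have hB0 : 0 ≤ B := (abs_nonneg _).trans (hB _ ⟨r, hr, x, rfl⟩)
      have h3 : L * B * (t - r) ≤ B / 2 := by
        have : L * (t - r) ≤ 1 / 2 := by nlinarith [hr.1]
        nlinarith
      have h4 := abs_sub_abs_le_abs_sub (g r x) (g t x)
      rw [abs_sub_comm] at h4
      linarith
  intro x
  refine absorb_bound {v | ∃ r, c < r ∧ r ≤ t ∧ ∃ x, v = |g r x|} (2 * C) N ?_ ?_ _
    ⟨t, hct, le_rfl, x, rfl⟩
  · rintro v ⟨r, hr, hrt, x, rfl⟩; exact key r hr hrt r ⟨le_rfl, hrt⟩ x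
  · rintro B hB v ⟨r, hr, hrt, x, rfl⟩
    have h1 := H c r B hr.le (fun q hq hqc _ x =>
        hB _ ⟨q, lt_of_le_of_ne hq.1 (Ne.symm hqc), hq.2.trans hrt, x, rfl⟩) x
    have h2 := hN x
    have hB0 : 0 ≤ B := (abs_nonneg _).trans (hB _ ⟨r, hr, hrt, x, rfl⟩)
    have h3 : L * B * (r - c) ≤ B / 2 := by
      have : L * (r - c) ≤ 1 / 2 := by nlinarith
      nlinarith
    have h4 := abs_sub_abs_le_abs_sub (g r x) (g c x)
    linarith

theorem compact_bound {X : Type*} (g : ℝ → X → ℝ) (K : Set ℝ) (hK : IsCompact K)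
    (h : ∀ t ∈ K, ∃ S, ∀ᶠ r in nhds t, ∀ x, |g r x| ≤ S) :
    ∃ S, ∀ r ∈ K, ∀ x, |g r x| ≤ S := by
  refine hK.induction_on (p := fun K => ∃ S, ∀ r ∈ K, ∀ x, |g r x| ≤ S) ⟨0, by simp⟩ ?_ ?_ ?_
  · rintro s t hst ⟨S, hS⟩
    exact ⟨S, fun r hr => hS r (hst hr)⟩
  · rintro s t ⟨S, hS⟩ ⟨T, hT⟩
    refine ⟨max S T, ?_⟩
    rintro r (hr | hr) x
    · exact (hS r hr x).trans (le_max_left _ _)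
    · exact (hT r hr x).trans (le_max_right _ _)
  · intro t ht
    obtain ⟨S, hS⟩ := h t ht
    exact ⟨_, mem_nhdsWithin_of_mem_nhds hS, S, fun r hr => hr⟩

theorem locally_bounded {X : Type*} (g : ℝ → X → ℝ) (L : ℝ) (hL : 0 < L)
    (hcont : ∀ x, Continuous fun t => g t x)
    (hbd : ∀ t, ∃ C, ∀ x, |g t x| ≤ C)
    (H : ∀ s t S, s ≤ t → (∀ r ∈ Set.Icc s t, r ≠ s → r ≠ t → ∀ x, |g r x| ≤ S) →
      ∀ x, |g t x - g s x| ≤ L * S * (t - s)) :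
    ∀ t, ∃ S, ∀ᶠ r in nhds t, ∀ x, |g r x| ≤ S := by
  by_contra hcon
  set U : Set ℝ := {t | ∃ S, ∀ᶠ r in nhds t, ∀ x, |g r x| ≤ S} with hU
  have hUo : IsOpen U := by
    rw [isOpen_iff_mem_nhds]
    rintro t ⟨S, hS⟩
    filter_upwards [eventually_eventually_nhds.2 hS] with r hr
    exact ⟨S, hr⟩
  have hEc : IsClosed Uᶜ := hUo.isClosed_compl
  have hne : Nonempty (Uᶜ : Set ℝ) := by
    obtain ⟨t, ht⟩ := not_forall.1 hcon
    exact ⟨⟨t, ht⟩⟩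
  have : CompleteSpace (Uᶜ : Set ℝ) := hEc.completeSpace_coe
  obtain ⟨N, ⟨⟨t0, ht0⟩, hint⟩⟩ := nonempty_interior_of_iUnion_of_closed
    (X := (Uᶜ : Set ℝ)) (f := fun N : ℕ => {t | ∀ x, |g t.1 x| ≤ N}) (by
      intro N
      simp only [Set.ofPred_forall]
      exact isClosed_iInter fun x =>
        isClosed_le ((hcont x).comp continuous_subtype_val).abs continuous_const) (by
      ext t
      simp only [Set.mem_iUnion, Set.mem_univ, iff_true]
      obtain ⟨C, hC⟩ := hbd t.1
      obtain ⟨N, hN⟩ := exists_nat_ge C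
      exact ⟨N, fun x => (hC x).trans hN⟩)
  rw [mem_interior_iff_mem_nhds, Metric.mem_nhds_iff] at hint
  obtain ⟨δ, hδ, hball⟩ := hint
  have hE : ∀ t ∈ Uᶜ, |t - t0| < δ → ∀ x, |g t x| ≤ N := by
    intro t ht htd
    exact hball (show (⟨t, ht⟩ : (Uᶜ : Set ℝ)) ∈ Metric.ball _ δ from by
      simpa [Subtype.dist_eq, Real.dist_eq] using htd)
  apply ht0
  refine ⟨2 * N, ?_⟩
  have hpos : 0 < min δ (1 / (2 * L)) := lt_min hδ (by positivity)
  filter_upwards [Metric.ball_mem_nhds t0 hpos] with t ht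
  rw [Metric.mem_ball, Real.dist_eq] at ht
  have hd1 : |t - t0| < δ := ht.trans_le (min_le_left _ _)
  have hd2 : L * |t - t0| ≤ 1 / 2 := by
    have := (ht.trans_le (min_le_right _ _)).le
    calc L * |t - t0| ≤ L * (1 / (2 * L)) := by gcongr
      _ = 1 / 2 := by field_simp
  by_cases htU : t ∈ Uᶜ
  · intro x
    have := hE t htU hd1 x
    have hN0 : (0:ℝ) ≤ N := Nat.cast_nonneg N
    linarith
  rcases lt_trichotomy t0 t with hlt | heq | hgt
  · obtain ⟨c, ⟨hcE, hc⟩, hmax⟩ := ((isCompact_Icc (a := t0) (b := t)).inter_left hEc).exists_isGreatest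
      ⟨t0, ht0, le_rfl, hlt.le⟩
    have hct : c < t := lt_of_le_of_ne hc.2 (fun h => htU (h ▸ hcE))
    rw [abs_of_pos (sub_pos.2 hlt)] at hd1 hd2
    refine oneside_bound g L hL hbd H c t N hct (by nlinarith [hc.1]) ?_ ?_
    · intro s hs hst
      refine compact_bound g _ isCompact_Icc ?_
      intro r hr
      by_contra hrU
      have := hmax (a := r) ⟨hrU, by linarith [hc.1, hr.1], hr.2⟩
      linarith [hr.1]
    · exact hE c hcE (by rw [abs_of_nonneg (by linarith [hc.1])]; linarith)
  · exact absurd ht0 (heq ▸ htU)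
  · obtain ⟨c, ⟨hcE, hc⟩, hmin⟩ := ((isCompact_Icc (a := t) (b := t0)).inter_left hEc).exists_isLeast
      ⟨t0, ht0, hgt.le, le_rfl⟩
    have hct : t < c := lt_of_le_of_ne hc.1 (fun h => htU (h ▸ hcE))
    rw [abs_of_neg (sub_neg.2 hgt)] at hd1 hd2
    have := oneside_bound (fun r x => g (-r) x) L hL (fun t => hbd (-t)) ?_ (-c) (-t) N (by linarith)
      (by nlinarith [hc.2]) ?_ ?_
    · simpa using this
    · intro s t S hst hS x
      have := H (-t) (-s) S (by linarith) (fun r hr h1 h2 x => by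
        have := hS (-r) ⟨by linarith [hr.2], by linarith [hr.1]⟩ (fun h => h2 (by linarith))
          (fun h => h1 (by linarith)) x
        simpa using this) x
      rw [abs_sub_comm]
      convert this using 1
      ring
    · intro s hs hst
      obtain ⟨S, hS⟩ := compact_bound g (Set.Icc t (-s)) isCompact_Icc (by
        intro r hr
        by_contra hrU
        have := hmin (a := r) ⟨hrU, hr.1, by linarith [hc.2, hr.2]⟩
        linarith [hr.2])
      exact ⟨S, fun r hr x => hS (-r) ⟨by linarith [hr.2], by linarith [hr.1]⟩ x⟩
    · intro x
      simpa using hE c hcE (by rw [abs_of_nonpos (by linarith [hc.2])]; linarith) x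

theorem bounded_on_compact {X : Type*} (γ F : ℝ → X → ℝ) (L : ℝ) (hL : 0 < L)
    (hcont : ∀ x, ContinuousOn (fun t => γ t x) (Set.Ici 0))
    (hbd : ∀ t ≥ 0, ∃ C : ℝ, ∀ x, |γ t x| ≤ C)
    (hder : ∀ t > 0, ∀ x, HasDerivAt (fun s => γ s x) (F t x) t)
    (hF : ∀ t > 0, ∀ C, (∀ x, |γ t x| ≤ C) → ∀ x, |F t x| ≤ L * C) (T : ℝ) :
    ∃ S, ∀ t ∈ Set.Icc 0 T, ∀ x, |γ t x| ≤ S := by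
  have H0 : ∀ s t S, 0 ≤ s → s ≤ t → (∀ r, s < r → r < t → ∀ x, |γ r x| ≤ S) →
      ∀ x, |γ t x - γ s x| ≤ L * S * (t - s) := by
    intro s t S hs hst hS x
    rcases hst.eq_or_lt with rfl | hlt
    · simp
    obtain ⟨c, hc, hc'⟩ := exists_hasDerivAt_eq_slope (fun r => γ r x) (fun r => F r x) hlt
      ((hcont x).mono (fun r hr => hs.trans hr.1)) (fun r hr => hder r (hs.trans_lt hr.1) x)
    have h1 := hF c (hs.trans_lt hc.1) S (hS c hc.1 hc.2) x
    have hts : 0 < t - s := sub_pos.2 hlt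
    rw [hc', abs_div, abs_of_pos hts, div_le_iff₀ hts] at h1
    exact h1
  have main := locally_bounded (fun t x => γ (max t 0) x) L hL ?_ (fun t => hbd _ (le_max_right _ _)) ?_
  · obtain ⟨S, hS⟩ := compact_bound _ (Set.Icc 0 T) isCompact_Icc (fun t _ => main t)
    refine ⟨S, fun t ht x => ?_⟩
    have := hS t ht x
    rwa [max_eq_left ht.1] at this
  · intro x
    exact (hcont x).comp_continuous (by fun_prop) (fun t => Set.mem_Ici.2 (le_max_right _ _))
  · intro s t S hst hS x
    have h1 := H0 (max s 0) (max t 0) S (le_max_right _ _) (max_le_max_right _ hst) (by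
      intro r hr hrt x
      have hr0 : 0 ≤ r := (le_max_right _ _).trans hr.le
      have hsr : s < r := (le_max_left _ _).trans_lt hr
      have hrt' : r < t := by
        rcases lt_max_iff.1 hrt with h | h
        · exact h
        · linarith
      have := hS r ⟨hsr.le, hrt'.le⟩ hsr.ne' hrt'.ne x
      rwa [max_eq_left hr0] at this) x
    refine h1.trans ?_
    rcases le_or_gt t 0 with ht | ht
    · rw [max_eq_right ht, max_eq_right (hst.trans ht)]
      rcases hst.eq_or_lt with rfl | hlt
      · simp
      have hm := hS ((s+t)/2) ⟨by linarith, by linarith⟩ (by intro h; linarith) (by intro h; linarith) x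
      have : 0 ≤ S := (abs_nonneg _).trans hm
      have : 0 ≤ t - s := by linarith
      simp only [sub_self, mul_zero]
      positivity
    · rcases hst.eq_or_lt with rfl | hlt
      · simp
      have hm := hS ((s+t)/2) ⟨by linarith, by linarith⟩ (by intro h; linarith) (by intro h; linarith) x
      have : 0 ≤ S := (abs_nonneg _).trans hm
      rw [max_eq_left ht.le]
      have : t - max s 0 ≤ t - s := by linarith [le_max_left s 0]
      gcongr

theorem scalar_compare (f f' G G' : ℝ → ℝ) (s T : ℝ)
    (hf : ContinuousOn f (Set.Icc s T)) (hf' : ∀ r ∈ Set.Ioo s T, HasDerivAt f (f' r) r)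
    (hG : ∀ r, HasDerivAt G (G' r) r) (hG0 : ∀ r ∈ Set.Icc s T, 0 ≤ G r)
    (h0 : f s ≤ G s) (hle : ∀ r ∈ Set.Ioo s T, 0 < f r → f' r ≤ G' r) :
    ∀ t ∈ Set.Icc s T, f t ≤ G t := by
  intro t ht
  rcases ht.1.eq_or_lt with rfl | hst
  · exact h0
  have hGc : Continuous G := continuous_iff_continuousAt.2 fun r => (hG r).continuousAt
  have key : ∀ ε > 0, f t ≤ G t + ε * (1 + (t - s)) := by
    intro ε hε
    have hst' : s ∈ Set.Icc s T := ⟨le_rfl, ht.1.trans ht.2⟩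
    have hev : ∀ᶠ r in nhdsWithin s (Set.Ioo s t), f r < G r + ε * (1 + (r - s)) := by
      have h1 : Tendsto f (nhdsWithin s (Set.Ioo s t)) (nhds (f s)) :=
        (hf s hst').mono_left (nhdsWithin_mono _ (fun r hr => ⟨hr.1.le, hr.2.le.trans ht.2⟩))
      have h2 : Tendsto (fun r => G r + ε * (1 + (r - s))) (nhdsWithin s (Set.Ioo s t))
          (nhds (G s + ε * (1 + (s - s)))) :=
        (Continuous.tendsto (by fun_prop) s).mono_left nhdsWithin_le_nhds
      exact h1.eventually_lt h2 (by simp; linarith)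
    have : (nhdsWithin s (Set.Ioo s t)).NeBot := left_nhdsWithin_Ioo_neBot hst
    obtain ⟨q, hq, hqm⟩ := (hev.and self_mem_nhdsWithin).exists
    refine image_le_of_deriv_right_lt_deriv_boundary' (f := f) (f' := f') (a := q) (b := t)
      (B := fun r => G r + ε * (1 + (r - s))) (B' := fun r => G' r + ε) ?_ ?_ hq.le ?_ ?_ ?_
      ⟨hqm.2.le, le_rfl⟩
    · exact hf.mono fun r hr => ⟨hqm.1.le.trans hr.1, hr.2.trans ht.2⟩
    · intro r hr
      exact (hf' r ⟨hqm.1.trans_le hr.1, hr.2.trans_le ht.2⟩).hasDerivWithinAt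
    · exact Continuous.continuousOn (by fun_prop)
    · intro r hr
      have h1 : HasDerivAt (fun r => ε * (1 + (r - s))) ε r := by
        simpa using (((hasDerivAt_id r).sub_const s).const_add 1).const_mul ε
      exact ((hG r).add h1).hasDerivWithinAt
    · intro r hr hEq
      have hsr : s < r := hqm.1.trans_le hr.1
      have hm : r ∈ Set.Ioo s T := ⟨hsr, hr.2.trans_le ht.2⟩
      have h0 := hG0 r ⟨hm.1.le, hm.2.le⟩
      have hpos : 0 < f r := by
        rw [hEq]
        have : 0 < ε * (1 + (r - s)) := mul_pos hε (by linarith)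
        linarith
      have := hle r hm hpos
      linarith
  refine le_of_forall_pos_le_add fun ε hε => ?_
  have hp : 0 < 1 + (t - s) := by linarith
  have := key (ε / (1 + (t - s))) (div_pos hε hp)
  rwa [div_mul_cancel₀ _ hp.ne'] at this

theorem hasDerivAt_expsum (a s : ℝ) (N : ℕ) (c : ℕ → ℝ) (r : ℝ) :
    HasDerivAt (fun r => ∑ j ∈ Finset.range (N + 1), (a * (r - s)) ^ j / j.factorial * c j)
      (a * ∑ j ∈ Finset.range N, (a * (r - s)) ^ j / j.factorial * c (j + 1)) r := by
  have h1 : HasDerivAt (fun r => a * (r - s)) a r := by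
    simpa using ((hasDerivAt_id r).sub_const s).const_mul a
  simp_rw [Finset.sum_range_succ' _ N]
  simp only [pow_zero, Nat.factorial_zero, Nat.cast_one]
  refine HasDerivAt.add_const _ ?_
  rw [Finset.mul_sum]
  refine HasDerivAt.fun_sum fun j _ => ?_
  have h2 := ((h1.pow (j + 1)).div_const ((j + 1).factorial : ℝ)).mul_const (c (j + 1))
  refine h2.congr_deriv ?_
  have : ((j + 1).factorial : ℝ) = (j + 1) * j.factorial := by
    rw [Nat.factorial_succ]; push_cast; ring
  rw [this]
  have h3 : (j.factorial : ℝ) ≠ 0 := by positivity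
  have h4 : (j + 1 : ℝ) ≠ 0 := by positivity
  simp only [Nat.add_sub_cancel]
  push_cast
  field_simp

section KopSec
variable {E : Type*} [NormedAddCommGroup E] [MeasurableSpace E] [BorelSpace E]
  [SecondCountableTopology E]

/-- averaging operator -/
noncomputable def Kop (μ : Measure E) (g : E → ℝ) (x : E) : ℝ := ∫ y, g (x - y) ∂μ

/-- bounded nonnegative measurable functions -/
def BNM (C : ℝ) (g : E → ℝ) : Prop := Measurable g ∧ ∀ x, 0 ≤ g x ∧ g x ≤ C

theorem BNM.integrable {C : ℝ} {g : E → ℝ} (h : BNM C g) (μ : Measure E) [IsProbabilityMeasure μ]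
    (x : E) : Integrable (fun y => g (x - y)) μ := by
  refine Integrable.of_bound (C := C) ?_ ?_
  · exact (h.1.comp (by fun_prop)).aestronglyMeasurable
  · refine Eventually.of_forall fun y => ?_
    rw [Real.norm_of_nonneg (h.2 _).1]
    exact (h.2 _).2

theorem BNM.kop {C : ℝ} {g : E → ℝ} (h : BNM C g) (μ : Measure E) [IsProbabilityMeasure μ] :
    BNM C (Kop μ g) := by
  refine ⟨?_, fun x => ⟨integral_nonneg fun y => (h.2 _).1, ?_⟩⟩
  · have : StronglyMeasurable (fun q : E × E => g (q.1 - q.2)) :=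
      (h.1.comp (by fun_prop)).stronglyMeasurable
    exact (this.integral_prod_right').measurable
  · calc Kop μ g x ≤ ∫ y, C ∂μ :=
        integral_mono (h.integrable μ x) (integrable_const _) fun y => (h.2 _).2
      _ = C := by simp

theorem BNM.iter {C : ℝ} {g : E → ℝ} (h : BNM C g) (μ : Measure E) [IsProbabilityMeasure μ]
    (j : ℕ) : BNM C ((Kop μ)^[j] g) := by
  induction j with
  | zero => exact h
  | succ j ih => rw [Function.iterate_succ_apply']; exact ih.kop μ

theorem kop_lintegral_le {C : ℝ} {g : E → ℝ} (h : BNM C g) (μ : Measure E) [IsProbabilityMeasure μ]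
    (ν : Measure E) [SFinite ν] [ν.IsAddRightInvariant] (p : ℝ) (hp : 1 < p) :
    ∫⁻ x, ‖Kop μ g x‖ₑ ^ p ∂ν ≤ ∫⁻ x, ‖g x‖ₑ ^ p ∂ν := by
  have hp0 : 0 < p := by linarith
  calc ∫⁻ x, ‖Kop μ g x‖ₑ ^ p ∂ν ≤ ∫⁻ x, ∫⁻ y, ‖g (x - y)‖ₑ ^ p ∂μ ∂ν := by
        refine lintegral_mono fun x => ?_
        have h1 := eLpNorm'_le_eLpNorm'_of_exponent_le one_pos hp.le μ
          (h.integrable μ x).aestronglyMeasurable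
        rw [eLpNorm'_eq_lintegral_enorm, eLpNorm'_eq_lintegral_enorm] at h1
        simp only [ENNReal.rpow_one, div_one] at h1
        have h2 : ‖Kop μ g x‖ₑ ≤ _ := (enorm_integral_le_lintegral_enorm _).trans h1
        calc ‖Kop μ g x‖ₑ ^ p ≤ _ := ENNReal.rpow_le_rpow h2 hp0.le
          _ = _ := by rw [← ENNReal.rpow_mul, one_div_mul_cancel hp0.ne', ENNReal.rpow_one]
    _ = ∫⁻ y, ∫⁻ x, ‖g (x - y)‖ₑ ^ p ∂ν ∂μ := by
        refine lintegral_lintegral_swap ?_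
        have : Measurable (fun q : E × E => g (q.1 - q.2)) := h.1.comp (by fun_prop)
        exact (this.enorm.pow_const p).aemeasurable
    _ = ∫⁻ y, ∫⁻ x, ‖g x‖ₑ ^ p ∂ν ∂μ := by
        refine lintegral_congr fun y => ?_
        exact lintegral_sub_right_eq_self (fun x => ‖g x‖ₑ ^ p) y
    _ = _ := by simp

theorem kop_eLpNorm_le {C : ℝ} {g : E → ℝ} (h : BNM C g) (μ : Measure E) [IsProbabilityMeasure μ]
    (ν : Measure E) [SFinite ν] [ν.IsAddRightInvariant] (p : ℝ) (hp : 1 < p) :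
    eLpNorm (Kop μ g) (ENNReal.ofReal p) ν ≤ eLpNorm g (ENNReal.ofReal p) ν := by
  have hp0 : 0 < p := by linarith
  rw [eLpNorm_eq_lintegral_rpow_enorm_toReal (by simpa using hp0) ENNReal.ofReal_ne_top,
    eLpNorm_eq_lintegral_rpow_enorm_toReal (by simpa using hp0) ENNReal.ofReal_ne_top,
    ENNReal.toReal_ofReal hp0.le]
  exact ENNReal.rpow_le_rpow (kop_lintegral_le h μ ν p hp) (by positivity)

theorem iter_eLpNorm_le {C : ℝ} {g : E → ℝ} (h : BNM C g) (μ : Measure E) [IsProbabilityMeasure μ]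
    (ν : Measure E) [SFinite ν] [ν.IsAddRightInvariant] (p : ℝ) (hp : 1 < p) (j : ℕ) :
    eLpNorm ((Kop μ)^[j] g) (ENNReal.ofReal p) ν ≤ eLpNorm g (ENNReal.ofReal p) ν := by
  induction j with
  | zero => exact le_rfl
  | succ j ih =>
    rw [Function.iterate_succ_apply']
    exact (kop_eLpNorm_le (h.iter μ j) μ ν p hp).trans ih

theorem expsum_eLpNorm_le {C : ℝ} {g : E → ℝ} (h : BNM C g) (μ : Measure E) [IsProbabilityMeasure μ]
    (ν : Measure E) [SFinite ν] [ν.IsAddRightInvariant] (p : ℝ) (hp : 1 < p) (z : ℝ) (hz : 0 ≤ z)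
    (N : ℕ) :
    eLpNorm (fun x => ∑ j ∈ Finset.range N, z ^ j / j.factorial * (Kop μ)^[j] g x)
      (ENNReal.ofReal p) ν ≤ ENNReal.ofReal (Real.exp z) * eLpNorm g (ENNReal.ofReal p) ν := by
  have h1 : (fun x => ∑ j ∈ Finset.range N, z ^ j / j.factorial * (Kop μ)^[j] g x)
      = ∑ j ∈ Finset.range N, (z ^ j / j.factorial) • ((Kop μ)^[j] g) := by
    ext x; simp [Finset.sum_apply]
  rw [h1]
  calc _ ≤ ∑ j ∈ Finset.range N, eLpNorm ((z ^ j / j.factorial) • ((Kop μ)^[j] g))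
          (ENNReal.ofReal p) ν :=
        eLpNorm_sum_le (fun j _ => ((h.iter μ j).1.const_smul _).aestronglyMeasurable)
          (by rw [← ENNReal.ofReal_one]; exact ENNReal.ofReal_le_ofReal hp.le)
    _ ≤ ∑ j ∈ Finset.range N, ENNReal.ofReal (z ^ j / j.factorial) *
          eLpNorm g (ENNReal.ofReal p) ν := by
        refine Finset.sum_le_sum fun j _ => ?_
        rw [eLpNorm_const_smul, Real.enorm_of_nonneg (by positivity)]
        gcongr
        exact iter_eLpNorm_le h μ ν p hp j
    _ = ENNReal.ofReal (∑ j ∈ Finset.range N, z ^ j / j.factorial) *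
          eLpNorm g (ENNReal.ofReal p) ν := by
        rw [← Finset.sum_mul, ENNReal.ofReal_sum_of_nonneg (fun j _ => by positivity)]
    _ ≤ _ := by
        gcongr
        exact Real.sum_le_exp_of_nonneg hz N

theorem iter_compare (μ : Measure E) [IsProbabilityMeasure μ] (a : ℝ) (ha : 0 < a)
    (γ F : ℝ → E → ℝ) (s T S : ℝ)
    (hcont : ∀ x, ContinuousOn (fun t => γ t x) (Set.Icc s T))
    (hmeas : ∀ t, Measurable (γ t))
    (hbd : ∀ t ∈ Set.Icc s T, ∀ x, |γ t x| ≤ S)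
    (hder : ∀ t ∈ Set.Ioo s T, ∀ x, HasDerivAt (fun r => γ r x) (F t x) t)
    (hF : ∀ t ∈ Set.Ioo s T, ∀ x, 0 < γ t x →
      F t x ≤ a * (Kop μ (fun y => max (γ t y) 0) x - γ t x)) (N : ℕ) :
    ∀ t ∈ Set.Icc s T, ∀ x, Real.exp (a * (t - s)) * max (γ t x) 0 ≤
      (∑ j ∈ Finset.range N, (a * (t - s)) ^ j / j.factorial *
        (Kop μ)^[j] (fun y => max (γ s y) 0) x)
      + (a * (t - s)) ^ N / N.factorial * (Real.exp (a * (T - s)) * S) := by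
  have hB : ∀ t ∈ Set.Icc s T, BNM S (fun y => max (γ t y) 0) := fun t ht =>
    ⟨(hmeas t).max measurable_const, fun x => ⟨le_max_right _ _,
      max_le ((le_abs_self _).trans (hbd t ht x)) ((abs_nonneg _).trans (hbd t ht x))⟩⟩
  induction N with
  | zero =>
    intro t ht x
    have := (hB t ht).2 x
    simp only [Finset.range_zero, Finset.sum_empty, pow_zero, Nat.factorial_zero, Nat.cast_one,
      zero_add, div_one, one_mul]
    have h2 := ht.2
    have := this.2
    gcongr
  | succ N ih =>
    intro t ht x
    have hsT : s ≤ T := ht.1.trans ht.2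
    have hsm : s ∈ Set.Icc s T := ⟨le_rfl, hsT⟩
    set R := Real.exp (a * (T - s)) * S with hR
    have hS0 : 0 ≤ S := (abs_nonneg _).trans (hbd s hsm x)
    have hR0 : 0 ≤ R := by positivity
    set g : E → ℝ := fun y => max (γ s y) 0 with hg
    have hgB := hB s hsm
    set c : ℕ → ℝ := fun j => if j < N + 1 then (Kop μ)^[j] g x else R with hc
    have hc0 : ∀ j, 0 ≤ c j := by
      intro j
      simp only [hc]
      split_ifs
      · exact ((hgB.iter μ j).2 x).1
      · exact hR0
    have hsum : ∀ r, ∑ j ∈ Finset.range (N + 1 + 1), (a * (r - s)) ^ j / j.factorial * c j =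
        (∑ j ∈ Finset.range (N + 1), (a * (r - s)) ^ j / j.factorial * (Kop μ)^[j] g x)
      + (a * (r - s)) ^ (N + 1) / (N + 1).factorial * R := by
      intro r
      rw [Finset.sum_range_succ]
      congr 1
      · refine Finset.sum_congr rfl fun j hj => ?_
        simp only [hc, if_pos (Finset.mem_range.1 hj)]
      · simp [hc]
    rw [← hsum]
    have hG0 : ∀ r ∈ Set.Icc s T, 0 ≤
        ∑ j ∈ Finset.range (N + 1 + 1), (a * (r - s)) ^ j / j.factorial * c j := by
      intro r hr
      have : 0 ≤ r - s := sub_nonneg.2 hr.1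
      exact Finset.sum_nonneg fun j _ => mul_nonneg (by positivity) (hc0 j)
    have hexp : ∀ r, HasDerivAt (fun r => Real.exp (a * (r - s))) (Real.exp (a * (r - s)) * a) r := by
      intro r
      have h1 : HasDerivAt (fun r => a * (r - s)) a r := by
        simpa using ((hasDerivAt_id r).sub_const s).const_mul a
      exact h1.exp
    have key := scalar_compare (fun r => Real.exp (a * (r - s)) * γ r x)
      (fun r => Real.exp (a * (r - s)) * a * γ r x + Real.exp (a * (r - s)) * F r x)
      (fun r => ∑ j ∈ Finset.range (N + 1 + 1), (a * (r - s)) ^ j / j.factorial * c j)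
      (fun r => a * ∑ j ∈ Finset.range (N + 1), (a * (r - s)) ^ j / j.factorial * c (j + 1)) s T
      (ContinuousOn.mul (by fun_prop) (hcont x))
      (fun r hr => (hexp r).mul (hder r hr x))
      (fun r => hasDerivAt_expsum a s (N + 1) c r) hG0
      (by
        rw [Finset.sum_range_succ']
        simp [hc, hg]) ?_ t ht
    · rw [mul_max_of_nonneg _ _ (Real.exp_pos _).le, mul_zero]
      exact max_le key (hG0 t ht)
    · intro r hr hpos
      have hγ : 0 < γ r x := pos_of_mul_pos_right hpos (Real.exp_pos _).le
      have h1 := hF r hr x hγ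
      have hrm : r ∈ Set.Icc s T := ⟨hr.1.le, hr.2.le⟩
      have h2 : Real.exp (a * (r - s)) * Kop μ (fun y => max (γ r y) 0) x ≤
          ∑ j ∈ Finset.range (N + 1), (a * (r - s)) ^ j / j.factorial * c (j + 1) := by
        have hint : ∀ j, Integrable (fun y => (a * (r - s)) ^ j / j.factorial *
          (Kop μ)^[j] g (x - y)) μ := fun j => ((hgB.iter μ j).integrable μ x).const_mul _
        calc Real.exp (a * (r - s)) * Kop μ (fun y => max (γ r y) 0) x
            = ∫ y, Real.exp (a * (r - s)) * max (γ r (x - y)) 0 ∂μ := by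
              rw [integral_const_mul]; rfl
          _ ≤ ∫ y, ((∑ j ∈ Finset.range N, (a * (r - s)) ^ j / j.factorial *
                (Kop μ)^[j] g (x - y)) + (a * (r - s)) ^ N / N.factorial * R) ∂μ := by
              refine integral_mono (((hB r hrm).integrable μ x).const_mul _)
                ((integrable_finsetSum _ fun j _ => hint j).add (integrable_const _)) ?_
              intro y
              exact ih r hrm (x - y)
          _ = (∑ j ∈ Finset.range N, (a * (r - s)) ^ j / j.factorial * (Kop μ)^[j+1] g x)
              + (a * (r - s)) ^ N / N.factorial * R := by
              rw [integral_add (integrable_finsetSum _ fun j _ => hint j) (integrable_const _),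
                integral_finsetSum _ fun j _ => hint j]
              congr 1
              · refine Finset.sum_congr rfl fun j _ => ?_
                rw [integral_const_mul, Function.iterate_succ_apply']
                rfl
              · simp
          _ = _ := by
              rw [Finset.sum_range_succ]
              congr 1
              · refine Finset.sum_congr rfl fun j hj => ?_
                have : j + 1 < N + 1 := by simpa using hj
                simp only [hc, if_pos this]
              · simp [hc]
      have h3 := mul_le_mul_of_nonneg_left h1 (Real.exp_pos (a * (r - s))).le
      have h4 := mul_le_mul_of_nonneg_left h2 ha.le
      nlinarith

theorem eLpNorm_decay (μ : Measure E) [IsProbabilityMeasure μ] (a : ℝ) (ha : 0 < a)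
    (γ F : ℝ → E → ℝ) (s T S : ℝ) (hsT : s ≤ T)
    (hcont : ∀ x, ContinuousOn (fun t => γ t x) (Set.Icc s T))
    (hmeas : ∀ t, Measurable (γ t))
    (hbd : ∀ t ∈ Set.Icc s T, ∀ x, |γ t x| ≤ S)
    (hder : ∀ t ∈ Set.Ioo s T, ∀ x, HasDerivAt (fun r => γ r x) (F t x) t)
    (hF : ∀ t ∈ Set.Ioo s T, ∀ x, 0 < γ t x →
      F t x ≤ a * (Kop μ (fun y => max (γ t y) 0) x - γ t x))
    (ν : Measure E) [SFinite ν] [ν.IsAddRightInvariant] (p : ℝ) (hp : 1 < p) :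
    eLpNorm (fun x => max (γ T x) 0) (ENNReal.ofReal p) ν ≤
      eLpNorm (fun x => max (γ s x) 0) (ENNReal.ofReal p) ν := by
  set z := a * (T - s) with hz
  have hz0 : 0 ≤ z := mul_nonneg ha.le (sub_nonneg.2 hsT)
  have hsm : s ∈ Set.Icc s T := ⟨le_rfl, hsT⟩
  have hTm : T ∈ Set.Icc s T := ⟨hsT, le_rfl⟩
  have hgB : BNM S (fun y => max (γ s y) 0) :=
    ⟨(hmeas s).max measurable_const, fun x => ⟨le_max_right _ _,
      max_le ((le_abs_self _).trans (hbd s hsm x)) ((abs_nonneg _).trans (hbd s hsm x))⟩⟩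
  set R := Real.exp z * S with hR
  have hcmp := fun N x => iter_compare μ a ha γ F s T S hcont hmeas hbd hder hF N T hTm x
  have hε : Tendsto (fun N : ℕ => z ^ N / N.factorial * R) atTop (nhds 0) := by
    simpa using (FloorSemiring.tendsto_pow_div_factorial_atTop z).mul_const R
  have h1 : eLpNorm (fun x => Real.exp z * max (γ T x) 0) (ENNReal.ofReal p) ν ≤
      ENNReal.ofReal (Real.exp z) * eLpNorm (fun x => max (γ s x) 0) (ENNReal.ofReal p) ν := by
    refine (Lp.eLpNorm_lim_le_liminf_eLpNorm (f := fun N x =>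
      max (Real.exp z * max (γ T x) 0 - z ^ N / N.factorial * R) 0) ?_ _ ?_).trans ?_
    · intro N
      have := hmeas T
      exact Measurable.aestronglyMeasurable (by fun_prop)
    · refine Eventually.of_forall fun x => ?_
      have h2 : Tendsto (fun N : ℕ => max (Real.exp z * max (γ T x) 0 - z ^ N / N.factorial * R) 0)
          atTop (nhds (max (Real.exp z * max (γ T x) 0 - 0) 0)) :=
        (tendsto_const_nhds.sub hε).max tendsto_const_nhds
      rwa [sub_zero, max_eq_left (a := Real.exp z * max (γ T x) 0) (by positivity)] at h2
    · refine liminf_le_of_le (by isBoundedDefault) (fun b hb => ?_)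
      obtain ⟨N, hN⟩ := hb.exists
      refine hN.trans ((eLpNorm_mono_real ?_).trans (expsum_eLpNorm_le hgB μ ν p hp z hz0 N))
      intro x
      rw [Real.norm_of_nonneg (le_max_right _ _)]
      refine max_le ?_ ?_
      · have := hcmp N x
        linarith
      · exact Finset.sum_nonneg fun j _ => mul_nonneg (by positivity) ((hgB.iter μ j).2 x).1
  have h2 : eLpNorm (fun x => Real.exp z * max (γ T x) 0) (ENNReal.ofReal p) ν =
      ENNReal.ofReal (Real.exp z) * eLpNorm (fun x => max (γ T x) 0) (ENNReal.ofReal p) ν := by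
    have := eLpNorm_const_smul (Real.exp z) (fun x => max (γ T x) 0) (ENNReal.ofReal p) ν
    rw [Real.enorm_of_nonneg (Real.exp_pos z).le] at this
    exact this
  rw [h2] at h1
  exact (ENNReal.mul_le_mul_iff_right (by simpa using Real.exp_pos z) ENNReal.ofReal_ne_top).1 h1

end KopSec

theorem kernel_measure {n : ℕ} (k : EuclideanSpace ℝ (Fin n) → ℝ)
    (hk0 : ∀ x, 0 ≤ k x) (hki : Integrable k) (hk1 : ∫ x, k x = 1) :
    ∃ μ : Measure (EuclideanSpace ℝ (Fin n)), IsProbabilityMeasure μ ∧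
      ∀ (g : EuclideanSpace ℝ (Fin n) → ℝ) x, ∫ y, k (x - y) * g y = Kop μ g x := by
  refine ⟨volume.withDensity (fun x => ENNReal.ofReal (k x)), ⟨?_⟩, ?_⟩
  · rw [withDensity_apply _ MeasurableSet.univ, Measure.restrict_univ,
      ← ofReal_integral_eq_lintegral_ofReal hki (Eventually.of_forall hk0), hk1,
      ENNReal.ofReal_one]
  · intro g x
    unfold Kop
    rw [integral_withDensity_eq_integral_toReal_smul₀ hki.aemeasurable.ennreal_ofReal
      (Eventually.of_forall fun _ => ENNReal.ofReal_lt_top)]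
    rw [← integral_sub_left_eq_self (fun y => k (x - y) * g y) volume x]
    simp [ENNReal.toReal_ofReal (hk0 _)]

theorem kop_abs_le {E : Type*} [NormedAddCommGroup E] [MeasurableSpace E]
    (μ : Measure E) [IsProbabilityMeasure μ] (g : E → ℝ) (C : ℝ) (h : ∀ x, |g x| ≤ C) (x : E) :
    |Kop μ g x| ≤ C := by
  have := norm_integral_le_of_norm_le_const (μ := μ) (f := fun y => g (x - y)) (C := C)
    (Eventually.of_forall fun y => h _)
  simpa [Kop] using this

/-- Monotone decay of the `L^p` norm of the positive part `γ⁺` for the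
nonlocal two-phase Stefan problem. -/
theorem stmt_7 (n : ℕ) (hn : 0 < n) (a b ℓ₀ : ℝ) (ha : 0 < a) (hb : 0 < b)
    (hℓ₀ : 0 < ℓ₀)
    (k η : EuclideanSpace ℝ (Fin n) → ℝ)
    (hk_nonneg : ∀ x, 0 ≤ k x) (hη_nonneg : ∀ x, 0 ≤ η x)
    (hk_integrable : Integrable k) (hη_integrable : Integrable η)
    (hk_int : ∫ x, k x = 1) (hη_int : ∫ x, η x = 1)
    (γ : ℝ → EuclideanSpace ℝ (Fin n) → ℝ)
    (hγ : IsTwoPhaseStefanSol a b ℓ₀ k η γ)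
    (p : ℝ) (hp : 1 < p)
    (hLp : ∀ t ≥ (0:ℝ), Integrable (fun x => (max (γ t x) 0) ^ p)) :
    (∀ t > (0:ℝ), deriv (fun s => ∫ x, (max (γ s x) 0) ^ p) t ≤ 0) ∧
    (∀ t > (0:ℝ), ∫ x, (max (γ t x) 0) ^ p ≤ ∫ x, (max (γ 0 x) 0) ^ p) := by
  obtain ⟨hcont, hmeas, hbd, hder⟩ := hγ
  obtain ⟨μ, hμ, hμk⟩ := kernel_measure k hk_nonneg hk_integrable hk_int
  obtain ⟨ρ, hρ, hρη⟩ := kernel_measure η hη_nonneg hη_integrable hη_int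
  simp only [hμk, hρη] at hder
  set F : ℝ → EuclideanSpace ℝ (Fin n) → ℝ := fun t x =>
    a * (Kop μ (fun y => max (γ t y) 0) x - max (γ t x) 0)
        + b * (Kop ρ (fun y => min (γ t y + ℓ₀) 0) x - min (γ t x + ℓ₀) 0) with hFdef
  have hder' : ∀ t > 0, ∀ x, HasDerivAt (fun s => γ s x) (F t x) t := hder
  have hFb : ∀ t > 0, ∀ C, (∀ x, |γ t x| ≤ C) → ∀ x, |F t x| ≤ (2 * (a + b)) * C := by
    intro t _ C hC x
    have m1 : ∀ y, |max (γ t y) 0| ≤ C := by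
      intro y
      have := abs_le.1 (hC y)
      rw [abs_of_nonneg (le_max_right _ _)]
      exact max_le this.2 (by linarith)
    have m2 : ∀ y, |min (γ t y + ℓ₀) 0| ≤ C := by
      intro y
      have := abs_le.1 (hC y)
      rw [abs_of_nonpos (min_le_right _ _), neg_le]
      exact le_min (by linarith) (by linarith)
    have k1 := abs_le.1 (kop_abs_le μ _ C m1 x)
    have k2 := abs_le.1 (kop_abs_le ρ _ C m2 x)
    have j1 := abs_le.1 (m1 x)
    have j2 := abs_le.1 (m2 x)
    simp only [hFdef]
    rw [abs_le]
    constructor <;> nlinarith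
  have decay : ∀ s T, 0 ≤ s → s ≤ T →
      ∫ x, (max (γ T x) 0) ^ p ≤ ∫ x, (max (γ s x) 0) ^ p := by
    intro s T hs hsT
    obtain ⟨S, hS⟩ := bounded_on_compact γ F (2 * (a + b)) (by positivity) hcont hbd hder' hFb T
    have h1 := eLpNorm_decay μ a ha γ F s T S hsT
      (fun x => (hcont x).mono fun r hr => hs.trans hr.1) hmeas
      (fun t ht => hS t ⟨hs.trans ht.1, ht.2⟩)
      (fun t ht x => hder' t (hs.trans_lt ht.1) x)
      (by
        intro t _ x hpos
        have h2 : Kop ρ (fun y => min (γ t y + ℓ₀) 0) x ≤ 0 :=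
          integral_nonpos fun y => min_le_right _ _
        have h3 : min (γ t x + ℓ₀) 0 = 0 := min_eq_right (by linarith)
        simp only [hFdef]
        rw [h3, max_eq_left hpos.le]
        nlinarith) volume p hp
    have hp0 : 0 < p := by linarith
    rw [eLpNorm_eq_lintegral_rpow_enorm_toReal (by simpa using hp0) ENNReal.ofReal_ne_top,
      eLpNorm_eq_lintegral_rpow_enorm_toReal (by simpa using hp0) ENNReal.ofReal_ne_top,
      ENNReal.toReal_ofReal hp0.le, ENNReal.rpow_le_rpow_iff (by positivity)] at h1
    have conv : ∀ t ≥ 0, ∫⁻ x, ‖max (γ t x) 0‖ₑ ^ p = ENNReal.ofReal (∫ x, (max (γ t x) 0) ^ p) := by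
      intro t ht
      rw [ofReal_integral_eq_lintegral_ofReal (hLp t ht)
        (Eventually.of_forall fun x => Real.rpow_nonneg (le_max_right _ _) _)]
      refine lintegral_congr fun x => ?_
      rw [Real.enorm_of_nonneg (le_max_right _ _),
        ENNReal.ofReal_rpow_of_nonneg (le_max_right _ _) hp0.le]
    rw [conv T (hs.trans hsT), conv s hs] at h1
    exact (ENNReal.ofReal_le_ofReal_iff
      (integral_nonneg fun x => Real.rpow_nonneg (le_max_right _ _) _)).1 h1
  refine ⟨fun t ht => ?_, fun t ht => decay 0 t le_rfl ht.le⟩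
  have hanti : AntitoneOn (fun s => ∫ x, (max (γ s x) 0) ^ p) (Set.Ici 0) :=
    fun s hs T _ hsT => decay s T hs hsT
  rw [← derivWithin_of_mem_nhds (Ici_mem_nhds ht)]
  exact hanti.derivWithin_nonpos
end

section
/- Let γ solve the nonlocal two-phase Stefan problem with kernels satisfying (K) and initial data γ₀ ∈ L^∞(ℝ^n) with γ₀ = -α₀ outside a bounded smooth domain Ω₀, α₀ ∈ (0, ℓ₀). Then for every t > 0 and every h ∈ ℝ^n, ∫_{ℝ^n} |γ(t, x+h) - γ(t,x)| dx ≤ ∫_{ℝ^n} |γ₀(x+h) - γ₀(x)| dx. -/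
open MeasureTheory Filter

open Topology

/-- Baire-type local boundedness. -/
lemma aux_baire (m : ℝ → ℝ) (δ : ℝ) (hδ : 0 < δ)
    (hcl : ∀ N : ℝ, IsClosed {t | m t ≤ N})
    (hest : ∀ s t, s ≤ t → t - s ≤ δ → (∃ S, ∀ r ∈ Set.Icc s t, m r ≤ S) →
      m t ≤ 2 * m s ∧ m s ≤ 2 * m t) :
    ∀ s t, ∃ S, ∀ r ∈ Set.Icc s t, m r ≤ S := by
  let G : Set ℝ := {t | ∃ S, ∀ᶠ r in 𝓝 t, m r ≤ S}
  have hGo : IsOpen G := by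
    rw [isOpen_iff_mem_nhds]
    rintro t ⟨S, hS⟩
    filter_upwards [eventually_eventually_nhds.2 hS] with r hr
    exact ⟨S, hr⟩
  -- bounded on compact subintervals of G
  have hcomp : ∀ K : Set ℝ, IsCompact K → K ⊆ G → ∃ S, ∀ r ∈ K, m r ≤ S := by
    intro K hK hKG
    refine hK.induction_on (p := fun K => ∃ S, ∀ r ∈ K, m r ≤ S) ⟨0, by simp⟩ ?_ ?_ ?_
    · rintro s t hst ⟨S, hS⟩
      exact ⟨S, fun r hr => hS r (hst hr)⟩
    · rintro s t ⟨S, hS⟩ ⟨S', hS'⟩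
      refine ⟨max S S', ?_⟩
      rintro r (hr | hr)
      · exact (hS r hr).trans (le_max_left _ _)
      · exact (hS' r hr).trans (le_max_right _ _)
    · intro x hx
      obtain ⟨S, hS⟩ := hKG hx
      exact ⟨_, mem_nhdsWithin_of_mem_nhds hS, S, fun r hr => hr⟩
  -- gaps
  have hgapR : ∀ c t, c < t → t - c ≤ δ → Set.Ioc c t ⊆ G → m t ≤ 2 * m c := by
    intro c t hct hd hG
    refine (hest c t hct.le hd ⟨max (m c) (2 * m t), ?_⟩).1
    intro r hr
    rcases eq_or_lt_of_le hr.1 with h | h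
    · rw [← h]; exact le_max_left _ _
    · refine le_trans ?_ (le_max_right _ _)
      refine (hest r t hr.2 (by linarith) (hcomp _ isCompact_Icc ?_)).2
      exact fun y hy => hG ⟨lt_of_lt_of_le h hy.1, hy.2⟩
  have hgapL : ∀ t c, t < c → c - t ≤ δ → Set.Ico t c ⊆ G → m t ≤ 2 * m c := by
    intro t c hct hd hG
    refine (hest t c hct.le hd ⟨max (m c) (2 * m t), ?_⟩).2
    intro r hr
    rcases eq_or_lt_of_le hr.2 with h | h
    · rw [h]; exact le_max_left _ _
    · refine le_trans ?_ (le_max_right _ _)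
      refine (hest t r hr.1 (by linarith) (hcomp _ isCompact_Icc ?_)).1
      exact fun y hy => hG ⟨hy.1, lt_of_le_of_lt hy.2 h⟩
  suffices hB : Gᶜ = ∅ by
    intro s t
    apply hcomp _ isCompact_Icc
    rw [Set.compl_empty_iff.1 hB]; exact Set.subset_univ _
  by_contra hne
  have hBc : IsClosed (Gᶜ) := hGo.isClosed_compl
  have : Nonempty (Gᶜ : Set ℝ) := (Set.nonempty_iff_ne_empty.2 hne).to_subtype
  have : CompleteSpace (Gᶜ : Set ℝ) := hBc.completeSpace_coe
  obtain ⟨N, ⟨t0, hB0⟩, hint⟩ := nonempty_interior_of_iUnion_of_closed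
    (f := fun N : ℕ => {t : (Gᶜ : Set ℝ) | m t ≤ N})
    (fun N => (hcl N).preimage continuous_subtype_val) (by
      ext t
      simp only [Set.mem_iUnion, Set.mem_ofPred_eq, Set.mem_univ, iff_true]
      exact exists_nat_ge _)
  rw [mem_interior_iff_mem_nhds, Metric.mem_nhds_iff] at hint
  obtain ⟨ε, hε, hball⟩ := hint
  have hBN : ∀ t ∈ Gᶜ, |t - t0| < ε → m t ≤ N := by
    intro t ht h
    exact hball (show (⟨t, ht⟩ : (Gᶜ : Set ℝ)) ∈ Metric.ball _ _ by
      simpa [Metric.mem_ball, Subtype.dist_eq, Real.dist_eq] using h)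
  apply hB0
  refine ⟨2 * N, ?_⟩
  have hN0 : (0 : ℝ) ≤ N := Nat.cast_nonneg N
  filter_upwards [Metric.ball_mem_nhds t0 (lt_min hε hδ)] with t ht
  rw [Metric.mem_ball, Real.dist_eq, lt_min_iff] at ht
  obtain ⟨h1, h2⟩ := ht
  rw [abs_lt] at h1 h2
  by_cases htG : t ∈ Gᶜ
  · have := hBN t htG (abs_lt.2 h1); linarith
  rcases lt_trichotomy t t0 with hlt | heq | hgt
  · have hK : IsCompact (Gᶜ ∩ Set.Icc t t0) := isCompact_Icc.inter_left hBc
    obtain ⟨c, hc, hmin⟩ := hK.exists_isLeast ⟨t0, hB0, hlt.le, le_rfl⟩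
    have hne : t ≠ c := fun h => htG (h ▸ hc.1)
    have htc : t < c := lt_of_le_of_ne hc.2.1 hne
    have hc2 := hc.2.2
    have := hBN c hc.1 (abs_lt.2 ⟨by linarith, by linarith⟩)
    have h3 := hgapL t c htc (by linarith) (fun y hy => by
      by_contra hy'
      have := hmin ⟨hy', hy.1, hy.2.le.trans hc2⟩
      exact absurd hy.2 (not_lt.2 this))
    linarith
  · exact absurd (heq ▸ hB0) htG
  · have hK : IsCompact (Gᶜ ∩ Set.Icc t0 t) := isCompact_Icc.inter_left hBc
    obtain ⟨c, hc, hmax⟩ := hK.exists_isGreatest ⟨t0, hB0, le_rfl, hgt.le⟩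
    have hne : c ≠ t := fun h => htG (h ▸ hc.1)
    have htc : c < t := lt_of_le_of_ne hc.2.2 hne
    have hc2 := hc.2.1
    have := hBN c hc.1 (abs_lt.2 ⟨by linarith, by linarith⟩)
    have h3 := hgapR c t htc (by linarith) (fun y hy => by
      by_contra hy'
      have := hmax ⟨hy', hc2.trans hy.1.le, hy.2⟩
      exact absurd hy.1 (not_lt.2 this))
    linarith

/-- right derivative of the absolute value -/
lemma aux_abs (g : ℝ → ℝ) (g' t : ℝ) (hg : HasDerivAt g g' t) :
    HasDerivWithinAt (fun s => |g s|) (if g t = 0 then |g'| else SignType.sign (g t) * g')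
      (Set.Ioi t) t := by
  split_ifs with h
  · have h1 := (hasDerivWithinAt_iff_tendsto_slope.1 (hg.hasDerivWithinAt (s := Set.Ioi t)))
    rw [hasDerivWithinAt_iff_tendsto_slope]
    refine h1.abs.congr' ?_
    have hd : Set.Ioi t \ {t} = Set.Ioi t := by simp
    rw [hd]
    filter_upwards [self_mem_nhdsWithin] with y hy
    have : 0 < y - t := sub_pos.2 hy
    simp [slope_def_field, h, abs_div, abs_of_pos this]
  · have := (hasDerivAt_abs h).comp t hg
    exact this.hasDerivWithinAt

lemma aux_H {n : ℕ} (p : ℝ → EuclideanSpace ℝ (Fin n) → ℝ)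
    (hpm : Measurable (Function.uncurry p)) (hp0 : ∀ r x, 0 ≤ p r x)
    (hpi : ∀ r, Integrable (p r)) (s t S : ℝ)
    (hS : ∀ r ∈ Set.Icc s t, ∫ x, p r x ≤ S) :
    Integrable (Function.uncurry p)
      ((volume.restrict (Set.Ioc s t)).prod (volume : Measure (EuclideanSpace ℝ (Fin n)))) := by
  rw [integrable_prod_iff hpm.aestronglyMeasurable]
  refine ⟨Eventually.of_forall fun r => hpi r, ?_⟩
  have hm : StronglyMeasurable (fun r => ∫ y, ‖Function.uncurry p (r, y)‖) :=
    (hpm.stronglyMeasurable.norm).integral_prod_right'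
  refine Integrable.mono' (integrable_const S) hm.aestronglyMeasurable ?_
  filter_upwards [ae_restrict_mem measurableSet_Ioc] with r hr
  rw [Real.norm_of_nonneg (integral_nonneg fun _ => norm_nonneg _)]
  refine le_trans (le_of_eq ?_) (hS r ⟨hr.1.le, hr.2⟩)
  congr 1; ext x
  exact Real.norm_of_nonneg (hp0 r x)

lemma aux_conv {n : ℕ} (k : EuclideanSpace ℝ (Fin n) → ℝ) (hk : Integrable k)
    (hk1 : ∫ x, k x = 1) (p : EuclideanSpace ℝ (Fin n) → ℝ) (hp : Integrable p) :
    Integrable (fun x => ∫ y, k (x - y) * p y) ∧ ∫ x, ∫ y, k (x - y) * p y = ∫ y, p y := by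
  have e : (fun x => ∫ y, k (x - y) * p y)
      = convolution p k (ContinuousLinearMap.mul ℝ ℝ) volume := by
    ext x
    simp [convolution, mul_comm]
  rw [e]
  refine ⟨hp.integrable_convolution _ hk, ?_⟩
  have := integral_convolution (μ := volume) (ν := volume) (ContinuousLinearMap.mul ℝ ℝ) hp hk
  rw [this]
  simp [hk1]

lemma aux_convm {n : ℕ} (k : EuclideanSpace ℝ (Fin n) → ℝ) (hk : Continuous k)
    (p : ℝ → EuclideanSpace ℝ (Fin n) → ℝ) (hpm : Measurable (Function.uncurry p)) :
    Measurable (Function.uncurry (fun r x => ∫ y, k (x - y) * p r y)) := by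
  have : StronglyMeasurable (fun z : (ℝ × EuclideanSpace ℝ (Fin n)) × EuclideanSpace ℝ (Fin n) =>
      k (z.1.2 - z.2) * p z.1.1 z.2) := by
    apply Measurable.stronglyMeasurable
    apply Measurable.mul
    · exact hk.measurable.comp (by fun_prop)
    · exact hpm.comp (by fun_prop : Measurable fun z : (ℝ × EuclideanSpace ℝ (Fin n)) ×
        EuclideanSpace ℝ (Fin n) => (z.1.1, z.2))
  exact this.integral_prod_right'.measurable

lemma aux_kabs {n : ℕ} (k : EuclideanSpace ℝ (Fin n) → ℝ) (hk0 : ∀ x, 0 ≤ k x)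
    (p : EuclideanSpace ℝ (Fin n) → ℝ) (x : EuclideanSpace ℝ (Fin n)) :
    |∫ y, k (x - y) * p y| ≤ ∫ y, k (x - y) * |p y| := by
  refine (abs_integral_le_integral_abs).trans (le_of_eq ?_)
  congr 1; ext y
  rw [abs_mul, abs_of_nonneg (hk0 _)]

/-- pointwise sign inequality for the right derivative -/
lemma aux_sign (a b d p q A B A' B' : ℝ) (ha : 0 < a) (hb : 0 < b)
    (hp : |p| ≤ |d|) (hq : |q| ≤ |d|)
    (hp1 : 0 ≤ d → 0 ≤ p) (hp2 : d ≤ 0 → p ≤ 0) (hq1 : 0 ≤ d → 0 ≤ q) (hq2 : d ≤ 0 → q ≤ 0)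
    (hA : |A| ≤ A') (hB : |B| ≤ B') :
    (if d = 0 then |a * (A - p) + b * (B - q)|
      else SignType.sign d * (a * (A - p) + b * (B - q)))
      ≤ a * A' + b * B' - (a * |p| + b * |q|) ∧
    -(if d = 0 then |a * (A - p) + b * (B - q)|
      else SignType.sign d * (a * (A - p) + b * (B - q)))
      ≤ a * A' + b * B' + (a * |p| + b * |q|) := by
  have hA1 := (abs_le.1 hA)
  have hB1 := (abs_le.1 hB)
  have e1 := mul_le_mul_of_nonneg_left hA1.1 ha.le
  have e2 := mul_le_mul_of_nonneg_left hA1.2 ha.le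
  have e3 := mul_le_mul_of_nonneg_left hB1.1 hb.le
  have e4 := mul_le_mul_of_nonneg_left hB1.2 hb.le
  split_ifs with h
  · subst h
    have hp0 : p = 0 := by simpa using hp
    have hq0 : q = 0 := by simpa using hq
    subst hp0 hq0
    simp only [sub_zero, abs_zero, mul_zero, add_zero]
    constructor
    · rw [abs_le]; constructor <;> linarith
    · have := abs_nonneg (a * A + b * B); linarith
  · rcases lt_or_gt_of_ne h with h | h
    · rw [abs_of_nonpos (hp2 h.le), abs_of_nonpos (hq2 h.le)]
      simp [sign_neg h]
      constructor <;> linarith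
    · rw [abs_of_nonneg (hp1 h.le), abs_of_nonneg (hq1 h.le)]
      have g1 := mul_nonneg ha.le (hp1 h.le)
      have g2 := mul_nonneg hb.le (hq1 h.le)
      simp [sign_pos h]
      constructor <;> linarith

lemma aux_main {n : ℕ} (a b : ℝ) (ha : 0 < a) (hb : 0 < b)
    (k η : EuclideanSpace ℝ (Fin n) → ℝ)
    (hkc : Continuous k) (hηc : Continuous η)
    (hk0 : ∀ x, 0 ≤ k x) (hη0 : ∀ x, 0 ≤ η x)
    (hk1 : ∫ x, k x = 1) (hη1 : ∫ x, η x = 1)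
    (D p q : ℝ → EuclideanSpace ℝ (Fin n) → ℝ)
    (hDc : ∀ x, Continuous fun r => D r x)
    (hDi : ∀ r, Integrable (D r))
    (hpm : Measurable (Function.uncurry p)) (hqm : Measurable (Function.uncurry q))
    (hp : ∀ r x, |p r x| ≤ |D r x|) (hq : ∀ r x, |q r x| ≤ |D r x|)
    (hp1 : ∀ r x, 0 ≤ D r x → 0 ≤ p r x) (hp2 : ∀ r x, D r x ≤ 0 → p r x ≤ 0)
    (hq1 : ∀ r x, 0 ≤ D r x → 0 ≤ q r x) (hq2 : ∀ r x, D r x ≤ 0 → q r x ≤ 0)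
    (hd : ∀ t > 0, ∀ x, HasDerivAt (fun s => D s x)
      (a * ((∫ y, k (x - y) * p t y) - p t x) + b * ((∫ y, η (x - y) * q t y) - q t x)) t)
    (s t S : ℝ) (hs : 0 ≤ s) (hst : s ≤ t) (hS : ∀ r ∈ Set.Icc s t, ∫ x, |D r x| ≤ S) :
    ∫ x, |D t x| ≤ ∫ x, |D s x| ∧
      ∫ x, |D s x| ≤ (∫ x, |D t x|) + 2 * (a + b) * S * (t - s) := by
  have hki : Integrable k := by
    by_contra h; rw [integral_undef h] at hk1; exact zero_ne_one hk1
  have hηi : Integrable η := by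
    by_contra h; rw [integral_undef h] at hη1; exact zero_ne_one hη1
  have hpa : Measurable (Function.uncurry fun r x => |p r x|) := hpm.abs
  have hqa : Measurable (Function.uncurry fun r x => |q r x|) := hqm.abs
  have hpi : ∀ r, Integrable (fun x => |p r x|) := fun r =>
    Integrable.mono' (hDi r).abs (hpa.comp measurable_prodMk_left).aestronglyMeasurable
      (Eventually.of_forall fun x => by simpa using hp r x)
  have hqi : ∀ r, Integrable (fun x => |q r x|) := fun r =>
    Integrable.mono' (hDi r).abs (hqa.comp measurable_prodMk_left).aestronglyMeasurable
      (Eventually.of_forall fun x => by simpa using hq r x)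
  have hpS : ∀ r ∈ Set.Icc s t, ∫ x, |p r x| ≤ S := fun r hr =>
    (integral_mono (hpi r) (hDi r).abs (hp r)).trans (hS r hr)
  have hqS : ∀ r ∈ Set.Icc s t, ∫ x, |q r x| ≤ S := fun r hr =>
    (integral_mono (hqi r) (hDi r).abs (hq r)).trans (hS r hr)
  set P : ℝ → EuclideanSpace ℝ (Fin n) → ℝ := fun r x => ∫ y, k (x - y) * |p r y| with hP
  set Q : ℝ → EuclideanSpace ℝ (Fin n) → ℝ := fun r x => ∫ y, η (x - y) * |q r y| with hQ
  have cP := fun r => aux_conv k hki hk1 _ (hpi r)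
  have cQ := fun r => aux_conv η hηi hη1 _ (hqi r)
  have IP := aux_H P (aux_convm k hkc _ hpa)
    (fun r x => integral_nonneg fun y => mul_nonneg (hk0 _) (abs_nonneg _))
    (fun r => (cP r).1) s t S (fun r hr => (cP r).2.trans_le (hpS r hr))
  have IQ := aux_H Q (aux_convm η hηc _ hqa)
    (fun r x => integral_nonneg fun y => mul_nonneg (hη0 _) (abs_nonneg _))
    (fun r => (cQ r).1) s t S (fun r hr => (cQ r).2.trans_le (hqS r hr))
  have Ip := aux_H (fun r x => |p r x|) hpa (fun r x => abs_nonneg _) hpi s t S hpS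
  have Iq := aux_H (fun r x => |q r x|) hqa (fun r x => abs_nonneg _) hqi s t S hqS
  have IF : Integrable (Function.uncurry fun r x => a * P r x + b * Q r x)
      ((volume.restrict (Set.Ioc s t)).prod (volume : Measure (EuclideanSpace ℝ (Fin n)))) :=
    (IP.const_mul a).add (IQ.const_mul b)
  have IH : Integrable (Function.uncurry fun r x => a * |p r x| + b * |q r x|)
      ((volume.restrict (Set.Ioc s t)).prod (volume : Measure (EuclideanSpace ℝ (Fin n)))) :=
    (Ip.const_mul a).add (Iq.const_mul b)
  have iF : ∀ r, Integrable (fun x => a * P r x + b * Q r x) := fun r =>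
    ((cP r).1.const_mul a).add ((cQ r).1.const_mul b)
  have iH : ∀ r, Integrable (fun x => a * |p r x| + b * |q r x|) := fun r =>
    ((hpi r).const_mul a).add ((hqi r).const_mul b)
  have vH : ∀ r, ∫ x, (a * |p r x| + b * |q r x|) = a * (∫ x, |p r x|) + b * ∫ x, |q r x| := by
    intro r
    rw [integral_add ((hpi r).const_mul a) ((hqi r).const_mul b), integral_const_mul,
      integral_const_mul]
  have vF : ∀ r, ∫ x, (a * P r x + b * Q r x) = a * (∫ x, |p r x|) + b * ∫ x, |q r x| := by
    intro r
    rw [integral_add ((cP r).1.const_mul a) ((cQ r).1.const_mul b), integral_const_mul,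
      integral_const_mul, (cP r).2, (cQ r).2]
  have key := fun r x => aux_sign a b (D r x) (p r x) (q r x) _ _ (P r x) (Q r x) ha hb
    (hp r x) (hq r x) (hp1 r x) (hp2 r x) (hq1 r x) (hq2 r x)
    (aux_kabs k hk0 (p r) x) (aux_kabs η hη0 (q r) x)
  have Im : Integrable (Function.uncurry fun r x =>
      a * P r x + b * Q r x - (a * |p r x| + b * |q r x|))
      ((volume.restrict (Set.Ioc s t)).prod (volume : Measure (EuclideanSpace ℝ (Fin n)))) :=
    IF.sub IH
  have Ipl : Integrable (Function.uncurry fun r x =>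
      a * P r x + b * Q r x + (a * |p r x| + b * |q r x|))
      ((volume.restrict (Set.Ioc s t)).prod (volume : Measure (EuclideanSpace ℝ (Fin n)))) :=
    IF.add IH
  constructor
  · have h1 : ∀ᵐ x, |D t x| - |D s x| ≤ ∫ r in Set.Ioc s t,
        (a * P r x + b * Q r x - (a * |p r x| + b * |q r x|)) := by
      filter_upwards [Im.prod_left_ae] with x hx
      rw [← intervalIntegral.integral_of_le hst]
      refine intervalIntegral.sub_le_integral_of_hasDeriv_right_of_le
        (g := fun r => |D r x|) hst (hDc x).abs.continuousOn
        (fun r hr => aux_abs _ _ _ (hd r (hs.trans_lt hr.1) x)) ?_ (fun r hr => (key r x).1)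
      rw [integrableOn_Icc_iff_integrableOn_Ioc]; exact hx
    have h2 := integral_mono_ae ((hDi t).abs.sub (hDi s).abs) Im.integral_prod_right h1
    simp only [Function.uncurry] at h2
    rw [← integral_integral_swap Im] at h2
    have h3 : ∀ r, ∫ x, (a * P r x + b * Q r x - (a * |p r x| + b * |q r x|)) = 0 := by
      intro r
      rw [integral_sub (iF r) (iH r), vF, vH, sub_self]
    simp only [h3, integral_zero] at h2
    have h4 := integral_sub (hDi t).abs (hDi s).abs
    simp only [Pi.sub_apply] at h2
    linarith
  · have h1 : ∀ᵐ x, |D s x| - |D t x| ≤ ∫ r in Set.Ioc s t,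
        (a * P r x + b * Q r x + (a * |p r x| + b * |q r x|)) := by
      filter_upwards [Ipl.prod_left_ae] with x hx
      rw [← intervalIntegral.integral_of_le hst]
      have := intervalIntegral.sub_le_integral_of_hasDeriv_right_of_le
        (g := fun r => -|D r x|) hst (hDc x).abs.neg.continuousOn
        (fun r hr => (aux_abs _ _ _ (hd r (hs.trans_lt hr.1) x)).neg)
        (by rw [integrableOn_Icc_iff_integrableOn_Ioc]; exact hx) (fun r hr => (key r x).2)
      linarith
    have h2 := integral_mono_ae ((hDi s).abs.sub (hDi t).abs) Ipl.integral_prod_right h1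
    simp only [Function.uncurry] at h2
    rw [← integral_integral_swap Ipl] at h2
    have h3 : ∀ r, ∫ x, (a * P r x + b * Q r x + (a * |p r x| + b * |q r x|))
        = 2 * (a * (∫ x, |p r x|) + b * ∫ x, |q r x|) := by
      intro r
      rw [integral_add (iF r) (iH r), vF, vH]; ring
    have h5 : ∫ r in Set.Ioc s t, (∫ x, (a * P r x + b * Q r x + (a * |p r x| + b * |q r x|)))
        ≤ ∫ r in Set.Ioc s t, (2 * (a + b) * S) := by
      refine setIntegral_mono_on Ipl.integral_prod_left
        (integrable_const _) measurableSet_Ioc ?_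
      intro r hr
      change ∫ x, (a * P r x + b * Q r x + (a * |p r x| + b * |q r x|)) ≤ _
      rw [h3]
      have e1 := mul_le_mul_of_nonneg_left (hpS r ⟨hr.1.le, hr.2⟩) ha.le
      have e2 := mul_le_mul_of_nonneg_left (hqS r ⟨hr.1.le, hr.2⟩) hb.le
      linarith
    have h6 : ∫ r in Set.Ioc s t, (2 * (a + b) * S) = 2 * (a + b) * S * (t - s) := by
      rw [setIntegral_const]
      simp [hst, mul_comm]
    have h4 := integral_sub (hDi s).abs (hDi t).abs
    simp only [Pi.sub_apply] at h2
    linarith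

lemma aux_lsc {n : ℕ} (D : ℝ → EuclideanSpace ℝ (Fin n) → ℝ)
    (hDc : ∀ x, Continuous fun r => D r x) (hDi : ∀ r, Integrable (D r)) (N : ℝ) :
    IsClosed {t | ∫ x, |D t x| ≤ N} := by
  have e : ∀ r, ENNReal.ofReal (∫ x, |D r x|) = ∫⁻ x, ‖D r x‖ₑ := by
    intro r
    have := ofReal_integral_norm_eq_lintegral_enorm (hDi r)
    simpa using this
  apply IsSeqClosed.isClosed
  intro u t hu hut
  simp only [Set.mem_ofPred_eq] at hu ⊢
  have hN : 0 ≤ N := (integral_nonneg fun _ => abs_nonneg _).trans (hu 0)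
  rw [← ENNReal.ofReal_le_ofReal_iff hN, e]
  have h1 := lintegral_liminf_le' (μ := (volume : Measure (EuclideanSpace ℝ (Fin n))))
    (u := atTop) (f := fun (i : ℕ) x => ‖D (u i) x‖ₑ)
    (fun i => (hDi (u i)).aestronglyMeasurable.enorm)
  have h2 : ∀ x, liminf (fun i => ‖D (u i) x‖ₑ) atTop = ‖D t x‖ₑ := fun x =>
    ((((hDc x).tendsto t).comp hut).enorm).liminf_eq
  simp only [h2] at h1
  refine h1.trans ?_
  refine (liminf_le_liminf (v := fun _ => ENNReal.ofReal N) (Eventually.of_forall fun i => ?_)).trans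
    (by simp)
  simp only [← e]
  exact ENNReal.ofReal_le_ofReal (hu i)

lemma aux_final {n : ℕ} (a b : ℝ) (ha : 0 < a) (hb : 0 < b)
    (k η : EuclideanSpace ℝ (Fin n) → ℝ)
    (hkc : Continuous k) (hηc : Continuous η)
    (hk0 : ∀ x, 0 ≤ k x) (hη0 : ∀ x, 0 ≤ η x)
    (hk1 : ∫ x, k x = 1) (hη1 : ∫ x, η x = 1)
    (D p q : ℝ → EuclideanSpace ℝ (Fin n) → ℝ)
    (hDc : ∀ x, Continuous fun r => D r x)
    (hDneg : ∀ r ≤ 0, D r = D 0)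
    (hDi : ∀ r, Integrable (D r))
    (hpm : Measurable (Function.uncurry p)) (hqm : Measurable (Function.uncurry q))
    (hp : ∀ r x, |p r x| ≤ |D r x|) (hq : ∀ r x, |q r x| ≤ |D r x|)
    (hp1 : ∀ r x, 0 ≤ D r x → 0 ≤ p r x) (hp2 : ∀ r x, D r x ≤ 0 → p r x ≤ 0)
    (hq1 : ∀ r x, 0 ≤ D r x → 0 ≤ q r x) (hq2 : ∀ r x, D r x ≤ 0 → q r x ≤ 0)
    (hd : ∀ t > 0, ∀ x, HasDerivAt (fun s => D s x)
      (a * ((∫ y, k (x - y) * p t y) - p t x) + b * ((∫ y, η (x - y) * q t y) - q t x)) t)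
    (t : ℝ) (ht : 0 ≤ t) :
    ∫ x, |D t x| ≤ ∫ x, |D 0 x| := by
  have main := aux_main a b ha hb k η hkc hηc hk0 hη0 hk1 hη1 D p q hDc hDi hpm hqm hp hq
    hp1 hp2 hq1 hq2 hd
  have m0 : ∀ r, 0 ≤ ∫ x, |D r x| := fun r => integral_nonneg fun _ => abs_nonneg _
  have hpos : ∀ s t, 0 ≤ s → s ≤ t → t - s ≤ 1 / (4 * (a + b)) →
      (∃ S, ∀ r ∈ Set.Icc s t, ∫ x, |D r x| ≤ S) →
      ∫ x, |D t x| ≤ 2 * ∫ x, |D s x| ∧ ∫ x, |D s x| ≤ 2 * ∫ x, |D t x| := by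
    rintro s t hs hst hd ⟨S, hS⟩
    have h1 : ∀ r ∈ Set.Icc s t, ∫ x, |D r x| ≤ ∫ x, |D s x| := fun r hr =>
      (main s r S hs hr.1 (fun r' hr' => hS r' ⟨hr'.1, hr'.2.trans hr.2⟩)).1
    have h2 := (main s t _ hs hst h1).2
    have h3 := h1 t ⟨hst, le_rfl⟩
    refine ⟨by linarith [m0 s], ?_⟩
    have hab : 0 < 4 * (a + b) := by positivity
    rw [le_div_iff₀ hab] at hd
    have := mul_le_mul_of_nonneg_left hd (m0 s)
    linarith
  obtain ⟨S, hS⟩ := aux_baire (fun r => ∫ x, |D r x|) (1 / (4 * (a + b))) (by positivity)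
    (aux_lsc D hDc hDi) (by
      rintro s t hst hd ⟨S, hS⟩
      rcases le_total t 0 with ht | ht
      · simp only [hDneg t ht, hDneg s (hst.trans ht)]
        constructor <;> linarith [m0 0]
      · rcases le_total s 0 with hs | hs
        · simp only [hDneg s hs]
          exact hpos 0 t le_rfl ht (by linarith) ⟨S, fun r hr => hS r ⟨hs.trans hr.1, hr.2⟩⟩
        · exact hpos s t hs hst hd ⟨S, hS⟩) 0 t
  exact (main 0 t S le_rfl ht hS).1

lemma aux_kint {n : ℕ} (k : EuclideanSpace ℝ (Fin n) → ℝ) (hk1 : ∫ x, k x = 1)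
    (g : EuclideanSpace ℝ (Fin n) → ℝ) (hg : Measurable g) (C : ℝ) (hC : ∀ x, |g x| ≤ C)
    (x h : EuclideanSpace ℝ (Fin n)) :
    (∫ y, k (x + h - y) * g y) - ∫ y, k (x - y) * g y
      = ∫ y, k (x - y) * (g (y + h) - g y) := by
  have hki : Integrable k := by
    by_contra h; rw [integral_undef h] at hk1; exact zero_ne_one hk1
  have e : ∫ y, k (x + h - y) * g y = ∫ y, k (x - y) * g (y + h) := by
    rw [← integral_add_right_eq_self (fun y => k (x + h - y) * g y) h]
    simp
  have hi : ∀ f : EuclideanSpace ℝ (Fin n) → ℝ, Measurable f → (∀ x, |f x| ≤ C) →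
      Integrable (fun y => k (x - y) * f y) := by
    intro f hf hfC
    exact (hki.comp_sub_left x).mul_bdd (c := C) hf.aestronglyMeasurable
      (Eventually.of_forall fun y => by simpa using hfC y)
  rw [e, ← integral_sub (hi (fun y => g (y + h)) (hg.comp (measurable_add_const h)) (fun y => hC _)) (hi _ hg hC)]
  congr 1; ext y; ring

/-- `L¹` contraction of spatial translates for the nonlocal two-phase Stefan
problem (Lemma 2.3). -/
theorem stmt_9 (n : ℕ) (hn : 0 < n) (a b ℓ₀ α₀ : ℝ)
    (ha : 0 < a) (hb : 0 < b) (hℓ₀ : 0 < ℓ₀) (hα₀ : 0 < α₀) (hα₀ℓ₀ : α₀ < ℓ₀)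
    (k η : EuclideanSpace ℝ (Fin n) → ℝ)
    (hk_cont : Continuous k) (hη_cont : Continuous η)
    (hk_nonneg : ∀ x, 0 ≤ k x) (hη_nonneg : ∀ x, 0 ≤ η x)
    (hk_bdd : ∃ C : ℝ, ∀ x, |k x| ≤ C) (hη_bdd : ∃ C : ℝ, ∀ x, |η x| ≤ C)
    (hk_int : ∫ x, k x = 1) (hη_int : ∫ x, η x = 1)
    (Ω₀ : Set (EuclideanSpace ℝ (Fin n)))
    (hΩ₀_open : IsOpen Ω₀) (hΩ₀_bdd : Bornology.IsBounded Ω₀)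
    (γ₀ : EuclideanSpace ℝ (Fin n) → ℝ)
    (hγ₀_meas : Measurable γ₀) (hγ₀_bdd : ∃ C : ℝ, ∀ x, |γ₀ x| ≤ C)
    (hγ₀_out : ∀ x ∉ closure Ω₀, γ₀ x = -α₀)
    (γ : ℝ → EuclideanSpace ℝ (Fin n) → ℝ)
    (hγ : IsTwoPhaseStefanSol a b ℓ₀ k η γ)
    (hγ0 : ∀ x, γ 0 x = γ₀ x)
    (hint : ∀ t ≥ (0:ℝ), ∀ h : EuclideanSpace ℝ (Fin n),
      Integrable (fun x => γ t (x + h) - γ t x)) :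
    ∀ t > (0:ℝ), ∀ h : EuclideanSpace ℝ (Fin n),
      ∫ x, |γ t (x + h) - γ t x| ≤ ∫ x, |γ₀ (x + h) - γ₀ x| := by
  intro t ht h
  obtain ⟨hc, hm, hbd, hd⟩ := hγ
  set g : ℝ → EuclideanSpace ℝ (Fin n) → ℝ := fun r => γ (max r 0) with hg
  have g0 : ∀ r, 0 ≤ r → g r = γ r := fun r hr => by simp [hg, max_eq_left hr]
  have gc : ∀ x, Continuous fun r => g r x := fun x =>
    (hc x).comp_continuous (by fun_prop : Continuous fun r : ℝ => max r 0)
      (fun r => le_max_right r 0)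
  have gm : ∀ r, Measurable (g r) := fun r => hm _
  have gs : ∀ r, Measurable (fun x => g r (x + h)) := fun r =>
    (gm r).comp (measurable_add_const h)
  have gJ : Measurable (Function.uncurry g) :=
    measurable_uncurry_of_continuous_of_measurable gc gm
  have gJs : Measurable (Function.uncurry fun r x => g r (x + h)) :=
    measurable_uncurry_of_continuous_of_measurable (fun x => gc (x + h)) gs
  have fin := aux_final a b ha hb k η hk_cont hη_cont hk_nonneg hη_nonneg hk_int hη_int
    (fun r x => g r (x + h) - g r x)
    (fun r x => max (g r (x + h)) 0 - max (g r x) 0)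
    (fun r x => min (g r (x + h) + ℓ₀) 0 - min (g r x + ℓ₀) 0)
    (fun x => (gc (x + h)).sub (gc x))
    (fun r hr => by simp [hg, max_eq_right hr])
    (fun r => hint _ (le_max_right r 0) h)
    ((gJs.max measurable_const).sub (gJ.max measurable_const))
    (((gJs.add_const ℓ₀).min measurable_const).sub ((gJ.add_const ℓ₀).min measurable_const))
    (fun r x => abs_max_sub_max_le_abs _ _ _)
    (fun r x => by
      have := abs_min_sub_min_le_max (g r (x + h) + ℓ₀) 0 (g r x + ℓ₀) 0
      simpa using this)
    (fun r x hx => sub_nonneg.2 (max_le_max_right _ (sub_nonneg.1 hx)))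
    (fun r x hx => sub_nonpos.2 (max_le_max_right _ (sub_nonpos.1 hx)))
    (fun r x hx => sub_nonneg.2 (min_le_min_right _ (by linarith)))
    (fun r x hx => sub_nonpos.2 (min_le_min_right _ (by linarith)))
    (by
      intro t ht x
      have hder : ∀ x, HasDerivAt (fun s => g s x)
          (a * ((∫ y, k (x - y) * max (γ t y) 0) - max (γ t x) 0)
          + b * ((∫ y, η (x - y) * min (γ t y + ℓ₀) 0) - min (γ t x + ℓ₀) 0)) t := by
        intro x
        refine (hd t ht x).congr_of_eventuallyEq ?_
        filter_upwards [Ioi_mem_nhds ht] with s hs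
        rw [g0 s (le_of_lt hs)]
      refine ((hder (x + h)).sub (hder x)).congr_deriv ?_
      obtain ⟨C, hC⟩ := hbd t ht.le
      rw [g0 t ht.le]
      rw [← aux_kint k hk_int (fun y => max (γ t y) 0) ((hm t).max measurable_const) C
        (fun y => by
          refine le_trans ?_ (hC y)
          have := abs_max_sub_max_le_abs (γ t y) 0 0
          simpa using this) x h,
        ← aux_kint η hη_int (fun y => min (γ t y + ℓ₀) 0)
        (((hm t).add_const ℓ₀).min measurable_const) (C + ℓ₀)
        (fun y => by
          have h1 := abs_min_sub_min_le_max (γ t y + ℓ₀) 0 0 0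
          have h2 : |min (γ t y + ℓ₀) 0| ≤ |γ t y + ℓ₀| := by simpa using h1
          have h3 := abs_add_le (γ t y) ℓ₀
          rw [abs_of_pos hℓ₀] at h3
          linarith [hC y]) x h]
      ring)
    t ht.le
  simp only [g0 t ht.le, g0 0 le_rfl, hγ0] at fin
  exact fin
end
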